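/- Let κ > 1 and let φ : ℝⁿ → ℝ be a function such that e^{-φ} is an unconditional probability density, the random vector X with density e^{-φ(x)} is isotropic, and (x_1,...,x_n) ↦ φ(x_1^κ,...,x_n^κ) is convex on the positive orthant ℝⁿ₊. Then for any a ∈ ℝⁿ, Var(a_1²X_1² + ... + a_n²X_n²) ≤ C_κ Σ_{j=1}^n |a_j|⁴, where C_κ depends only on κ. -/

import Mathlib

open MeasureTheory ProbabilityTheory Real

/-!
Pass to the root coordinates `u i = |x i| ^ (1 / κ)`. There the potential becomes convex, and the
Jacobian `∏ i, u i ^ (κ - 1)` makes the law strictly log-concave, with gain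
`(κ - 1) * ((u i - v i) / (u i + v i)) ^ 2` in each coordinate. Since `u ^ p - v ^ p` is at most a
constant times `|u - v| / (u + v) * midpoint u v ^ p`, the gain absorbs the differences of
`g u = ∑ j, b j * u j ^ p`, and the Prékopa–Leindler inequality bounds `E e^{s g} * E e^{-s g}` by
`(E e^{s² Q}) ^ 2`, where `Q` is a multiple of `∑ j, (b j * u j ^ p) ^ 2`. Comparing the terms of
order `s²` at `s = 0` gives `Var g ≤ 2 * E Q`. Finally `u ≤ 2 * midpoint u v` and Prékopa–Leindler
again bound `E u j ^ (2 * p)` by `(2 ^ p * E u j ^ p) ^ 2`; take `p = 2 * κ`, so that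
`u j ^ p = x j ^ 2`.
-/

open Set Filter Topology
open scoped ENNReal Pointwise

/-! ### The Prékopa–Leindler inequality on the line -/

lemma volume_add_volume_le_volume_add_of_isCompact {A B : Set ℝ} (hA : IsCompact A)
    (hB : IsCompact B) (hA₀ : A.Nonempty) (hB₀ : B.Nonempty) :
    volume A + volume B ≤ volume (A + B) := by
  obtain ⟨a, haA, ha⟩ := hA.exists_isGreatest hA₀
  obtain ⟨b, hbB, hb⟩ := hB.exists_isLeast hB₀
  -- The translates `A + min B` and `max A + B` lie in `A + B` and meet only at `max A + min B`.
  have inter_null : volume ((A + {b}) ∩ ({a} + B)) = 0 := by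
    refine measure_mono_null (t := {a + b}) ?_ Real.volume_singleton
    rintro _ ⟨⟨x, hx, _, rfl, rfl⟩, _, rfl, y, hy, hxy⟩
    have hxa := ha hx
    have hby := hb hy
    simp only [mem_singleton_iff] at hxy ⊢
    linarith
  calc volume A + volume B = volume (A + {b}) + volume ({a} + B) := by
        simp only [add_singleton, singleton_add, image_add_right, image_add_left,
          measure_preimage_add_right, measure_preimage_add]
    _ = volume ((A + {b}) ∪ ({a} + B)) := by
        rw [← measure_union_add_inter _ (isCompact_singleton.add hB).measurableSet,
          inter_null, add_zero]
    _ ≤ volume (A + B) :=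
        measure_mono <| union_subset (add_subset_add_left <| singleton_subset_iff.2 hbB)
          (add_subset_add_right <| singleton_subset_iff.2 haA)

lemma volume_add_volume_le_volume_add {A B : Set ℝ} (hA : MeasurableSet A)
    (hB : MeasurableSet B) (hA₀ : A.Nonempty) (hB₀ : B.Nonempty) :
    volume A + volume B ≤ volume (A + B) := by
  obtain ⟨a, ha⟩ := hA₀
  obtain ⟨b, hb⟩ := hB₀
  rw [hA.measure_eq_iSup_isCompact, hB.measure_eq_iSup_isCompact]
  simp only [iSup_and']
  refine ENNReal.biSup_add_biSup_le' ⟨∅, by simp⟩ ⟨∅, by simp⟩ ?_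
  rintro K ⟨hKA, hK⟩ L ⟨hLB, hL⟩
  calc volume K + volume L ≤ volume (insert a K) + volume (insert b L) := by
        gcongr <;> exact subset_insert _ _
    _ ≤ volume (insert a K + insert b L) :=
        volume_add_volume_le_volume_add_of_isCompact (hK.insert a) (hL.insert b)
          (insert_nonempty _ _) (insert_nonempty _ _)
    _ ≤ volume (A + B) :=
        measure_mono <| add_subset_add (insert_subset ha hKA) (insert_subset hb hLB)

lemma lintegral_eq_lintegral_measure_ofReal_lt {α : Type*} [MeasurableSpace α] (μ : Measure α)
    {f : α → ℝ≥0∞} (hf : Measurable f) (hf_top : ∀ x, f x ≠ ∞) :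
    ∫⁻ x, f x ∂μ = ∫⁻ t in Ioi (0 : ℝ), μ {x | ENNReal.ofReal t < f x} := by
  calc ∫⁻ x, f x ∂μ = ∫⁻ x, ENNReal.ofReal (f x).toReal ∂μ := by
        simp only [ENNReal.ofReal_toReal (hf_top _)]
    _ = ∫⁻ t in Ioi (0 : ℝ), μ {x | t < (f x).toReal} :=
        lintegral_eq_lintegral_meas_lt μ (.of_forall fun _ ↦ ENNReal.toReal_nonneg)
          hf.ennreal_toReal.aemeasurable
    _ = ∫⁻ t in Ioi (0 : ℝ), μ {x | ENNReal.ofReal t < f x} :=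
        setLIntegral_congr_fun measurableSet_Ioi fun t ht ↦ by
          simp only [ENNReal.ofReal_lt_iff_lt_toReal (le_of_lt ht) (hf_top _)]

lemma measurable_measure_ofReal_lt {α : Type*} [MeasurableSpace α] (μ : Measure α)
    (f : α → ℝ≥0∞) : Measurable fun t : ℝ ↦ μ {x | ENNReal.ofReal t < f x} :=
  Antitone.measurable fun _ _ hst ↦
    measure_mono fun _ hx ↦ (ENNReal.ofReal_le_ofReal hst).trans_lt hx

section PrekopaLeindlerReal

variable {f g h : ℝ → ℝ≥0∞}

lemma volume_superlevel_add_le (hf : Measurable f) (hg : Measurable g)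
    (hfgh : ∀ x y, f x * g y ≤ h (midpoint ℝ x y) ^ 2) {t : ℝ≥0∞}
    (hft : t < ⨆ x, f x) (hgt : t < ⨆ x, g x) :
    volume {x | t < f x} + volume {x | t < g x} ≤ 2 * volume {x | t < h x} := by
  calc volume {x | t < f x} + volume {x | t < g x} ≤ volume ({x | t < f x} + {x | t < g x}) :=
        volume_add_volume_le_volume_add (measurableSet_lt measurable_const hf)
          (measurableSet_lt measurable_const hg) (lt_iSup_iff.1 hft) (lt_iSup_iff.1 hgt)
    _ ≤ volume ((2 : ℝ) • {x | t < h x}) := by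
        refine measure_mono ?_
        rintro _ ⟨x, hx, y, hy, rfl⟩
        refine ⟨midpoint ℝ x y, ?_, by simp [midpoint_eq_smul_add]⟩
        refine lt_of_pow_lt_pow_left' (M := ℝ≥0∞) 2 ?_
        calc t ^ 2 = t * t := sq t
          _ < f x * g y := ENNReal.mul_lt_mul hx hy
          _ ≤ h (midpoint ℝ x y) ^ 2 := hfgh x y
    _ = 2 * volume {x | t < h x} := by simp [Measure.addHaar_smul]

lemma lintegral_add_lintegral_le_of_iSup_eq_one (hf : Measurable f) (hg : Measurable g)
    (hh : Measurable h) (hf_sup : ⨆ x, f x = 1) (hg_sup : ⨆ x, g x = 1)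
    (hfgh : ∀ x y, f x * g y ≤ h (midpoint ℝ x y) ^ 2) :
    (∫⁻ x, f x) + ∫⁻ x, g x ≤ 2 * ∫⁻ x, h x := by
  have hf_le x : f x ≤ 1 := hf_sup ▸ le_iSup f x
  have hg_le x : g x ≤ 1 := hg_sup ▸ le_iSup g x
  have layer {u : ℝ → ℝ≥0∞} (hu : Measurable u) (hu_le : ∀ x, u x ≤ 1) :=
    lintegral_eq_lintegral_measure_ofReal_lt volume hu
      fun x ↦ ne_top_of_le_ne_top ENNReal.one_ne_top (hu_le x)
  -- Truncating `h` at `1` discards the levels `t ≥ 1`, where Brunn–Minkowski says nothing.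
  have hfgh_min x y : f x * g y ≤ min (h (midpoint ℝ x y)) 1 ^ 2 := by
    rcases min_choice (h (midpoint ℝ x y)) 1 with hmin | hmin <;> rw [hmin]
    · exact hfgh x y
    · simpa using mul_le_one' (hf_le x) (hg_le y)
  refine le_trans ?_ (mul_le_mul_right (lintegral_mono fun x ↦ min_le_left (h x) 1) 2)
  rw [layer hf hf_le, layer hg hg_le, layer (hh.min measurable_const) fun x ↦ min_le_right _ _,
    ← lintegral_add_left (measurable_measure_ofReal_lt _ f),
    ← lintegral_const_mul _ (measurable_measure_ofReal_lt _ _)]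
  refine lintegral_mono fun t ↦ ?_
  rcases lt_or_ge (ENNReal.ofReal t) 1 with ht | ht
  · exact volume_superlevel_add_le hf hg hfgh_min (hf_sup ▸ ht) (hg_sup ▸ ht)
  · simp [((hf_le _).trans ht).not_gt, ((hg_le _).trans ht).not_gt]

lemma ennreal_mul_le_sq_of_add_le_two_mul {a b c : ℝ≥0∞} (h : a + b ≤ 2 * c) : a * b ≤ c ^ 2 := by
  rcases eq_or_ne c ∞ with rfl | hc
  · simp
  obtain ⟨ha, hb⟩ := ENNReal.add_ne_top.1 (ne_top_of_le_ne_top (by finiteness) h)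
  lift a to NNReal using ha
  lift b to NNReal using hb
  lift c to NNReal using hc
  norm_cast at h ⊢
  refine le_of_mul_le_mul_left (a := 4) ?_ (by norm_num)
  calc 4 * (a * b) = 4 * a * b := (mul_assoc ..).symm
    _ ≤ (a + b) ^ 2 := four_mul_le_sq_add a b
    _ ≤ (2 * c) ^ 2 := by gcongr
    _ = 4 * c ^ 2 := by ring

lemma lintegral_mul_lintegral_le_of_iSup_ne_top (hf : Measurable f) (hg : Measurable g)
    (hh : Measurable h) (hf_sup : ⨆ x, f x ≠ ∞) (hg_sup : ⨆ x, g x ≠ ∞)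
    (hfgh : ∀ x y, f x * g y ≤ h (midpoint ℝ x y) ^ 2) :
    (∫⁻ x, f x) * ∫⁻ x, g x ≤ (∫⁻ x, h x) ^ 2 := by
  set a := ⨆ x, f x with ha
  set b := ⨆ x, g x with hb
  rcases eq_or_ne a 0 with ha₀ | ha₀
  · simp [ENNReal.iSup_eq_zero.1 ha₀]
  rcases eq_or_ne b 0 with hb₀ | hb₀
  · simp [ENNReal.iSup_eq_zero.1 hb₀]
  obtain ⟨c, hc⟩ : ∃ c : ℝ≥0∞, c ^ 2 = a * b :=
    ⟨(a * b) ^ (2⁻¹ : ℝ), by rw [← ENNReal.rpow_natCast, ← ENNReal.rpow_mul]; simp⟩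
  have hab_inv : a⁻¹ * b⁻¹ = c⁻¹ ^ 2 := by
    rw [← ENNReal.mul_inv (.inl ha₀) (.inl hf_sup), ← hc, ENNReal.inv_pow]
  have hc_inv : c ^ 2 * c⁻¹ ^ 2 = 1 := by
    rw [← ENNReal.inv_pow, hc]
    exact ENNReal.mul_inv_cancel (mul_ne_zero ha₀ hb₀) (ENNReal.mul_ne_top hf_sup hg_sup)
  have normalized : (∫⁻ x, a⁻¹ * f x) * (∫⁻ x, b⁻¹ * g x) ≤ (∫⁻ x, c⁻¹ * h x) ^ 2 := by
    refine ennreal_mul_le_sq_of_add_le_two_mul <| lintegral_add_lintegral_le_of_iSup_eq_one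
      (hf.const_mul _) (hg.const_mul _) (hh.const_mul _) ?_ ?_ fun x y ↦ ?_
    · rw [← ENNReal.mul_iSup, ← ha, ENNReal.inv_mul_cancel ha₀ hf_sup]
    · rw [← ENNReal.mul_iSup, ← hb, ENNReal.inv_mul_cancel hb₀ hg_sup]
    · rw [mul_mul_mul_comm, hab_inv, mul_pow]
      gcongr
      exact hfgh x y
  rw [lintegral_const_mul _ hf, lintegral_const_mul _ hg, lintegral_const_mul _ hh,
    mul_mul_mul_comm, hab_inv, mul_pow] at normalized
  have cancel (z : ℝ≥0∞) : c ^ 2 * (c⁻¹ ^ 2 * z) = z := by rw [← mul_assoc, hc_inv, one_mul]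
  calc (∫⁻ x, f x) * ∫⁻ x, g x = c ^ 2 * (c⁻¹ ^ 2 * ((∫⁻ x, f x) * ∫⁻ x, g x)) := (cancel _).symm
    _ ≤ c ^ 2 * (c⁻¹ ^ 2 * (∫⁻ x, h x) ^ 2) := by gcongr
    _ = (∫⁻ x, h x) ^ 2 := cancel _

theorem lintegral_mul_lintegral_le_lintegral_sq (hf : Measurable f) (hg : Measurable g)
    (hh : Measurable h) (hfgh : ∀ x y, f x * g y ≤ h (midpoint ℝ x y) ^ 2) :
    (∫⁻ x, f x) * ∫⁻ x, g x ≤ (∫⁻ x, h x) ^ 2 := by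
  have lintegral_eq_iSup_min {u : ℝ → ℝ≥0∞} (hu : Measurable u) :
      ∫⁻ x, u x = ⨆ N : ℕ, ∫⁻ x, min (u x) N := by
    rw [← lintegral_iSup (fun N ↦ hu.min measurable_const)
      fun i j hij x ↦ min_le_min le_rfl (Nat.cast_le.2 hij)]
    refine lintegral_congr fun x ↦ ?_
    rw [← inf_iSup_eq, ENNReal.iSup_natCast, inf_top_eq]
  have iSup_min_ne_top (u : ℝ → ℝ≥0∞) (N : ℕ) : ⨆ x, min (u x) N ≠ ∞ :=
    ne_top_of_le_ne_top (ENNReal.natCast_ne_top N) (iSup_le fun x ↦ min_le_right _ _)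
  rw [lintegral_eq_iSup_min hf, lintegral_eq_iSup_min hg]
  simp only [ENNReal.iSup_mul, ENNReal.mul_iSup, iSup_le_iff]
  intro M N
  refine lintegral_mul_lintegral_le_of_iSup_ne_top (hf.min measurable_const)
    (hg.min measurable_const) hh (iSup_min_ne_top f _) (iSup_min_ne_top g _) fun x y ↦ ?_
  exact (mul_le_mul' (min_le_left _ _) (min_le_left _ _)).trans (hfgh x y)

end PrekopaLeindlerReal

/-! ### Prékopa–Leindler inequalities with a cost -/

section PrekopaLeindlerOn

variable {E F : Type*} [AddCommGroup E] [Module ℝ E] [MeasurableSpace E]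
  [AddCommGroup F] [Module ℝ F] [MeasurableSpace F]

/-- The midpoint Prékopa–Leindler inequality for the measure `μ`, with the hypothesis on the
functions required on `S` only and relaxed there by the factor `exp (-c x y)`. A positive cost `c`
expresses that `μ` is strictly log-concave. -/
def PrekopaLeindlerOn (μ : Measure E) (S : Set E) (c : E → E → ℝ) : Prop :=
  ∀ ⦃f g h : E → ℝ≥0∞⦄, Measurable f → Measurable g → Measurable h →
    (∀ x ∈ S, ∀ y ∈ S, f x * g y * ENNReal.ofReal (exp (-c x y)) ≤ h (midpoint ℝ x y) ^ 2) →
    (∫⁻ x, f x ∂μ) * ∫⁻ x, g x ∂μ ≤ (∫⁻ x, h x ∂μ) ^ 2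

namespace PrekopaLeindlerOn

variable {μ : Measure E} {ν : Measure F} {S T : Set E} {U : Set F} {c d : E → E → ℝ}
  {e : F → F → ℝ}

theorem volume_real : PrekopaLeindlerOn (volume : Measure ℝ) univ 0 :=
  fun _ _ _ hf hg hh hfgh ↦ lintegral_mul_lintegral_le_lintegral_sq hf hg hh
    fun x y ↦ by simpa using hfgh x (mem_univ x) y (mem_univ y)

lemma comap_measurableEquiv (hν : PrekopaLeindlerOn ν U e) (φ : E ≃ᵐ F)
    (hφ : MeasurePreserving φ μ ν)
    (hφ_mid : ∀ x y, φ (midpoint ℝ x y) = midpoint ℝ (φ x) (φ y)) :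
    PrekopaLeindlerOn μ (φ ⁻¹' U) fun x y ↦ e (φ x) (φ y) := by
  intro f g h hf hg hh hfgh
  have lintegral_symm (u : E → ℝ≥0∞) : ∫⁻ x, u x ∂μ = ∫⁻ y, u (φ.symm y) ∂ν := by
    simp only [← hφ.lintegral_comp_emb φ.measurableEmbedding, φ.symm_apply_apply]
  have hφ_symm_mid (x y : F) :
      φ.symm (midpoint ℝ x y) = midpoint ℝ (φ.symm x) (φ.symm y) := by
    rw [φ.symm_apply_eq, hφ_mid, φ.apply_symm_apply, φ.apply_symm_apply]
  simp only [lintegral_symm]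
  refine hν (hf.comp φ.symm.measurable) (hg.comp φ.symm.measurable) (hh.comp φ.symm.measurable)
    fun x hx y hy ↦ ?_
  simpa only [Function.comp_apply, φ.apply_symm_apply, hφ_symm_mid] using
    hfgh (φ.symm x) (by simpa using hx) (φ.symm y) (by simpa using hy)

lemma prod [SFinite ν] (hμ : PrekopaLeindlerOn μ S c) (hν : PrekopaLeindlerOn ν U e) :
    PrekopaLeindlerOn (μ.prod ν) (S ×ˢ U) fun p q ↦ c p.1 q.1 + e p.2 q.2 := by
  intro f g h hf hg hh hfgh
  rw [lintegral_prod f hf.aemeasurable, lintegral_prod g hg.aemeasurable,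
    lintegral_prod h hh.aemeasurable]
  refine hμ hf.lintegral_prod_right' hg.lintegral_prod_right' hh.lintegral_prod_right'
    fun x hx x' hx' ↦ ?_
  have slice {u : E × F → ℝ≥0∞} (hu : Measurable u) (z : E) : Measurable fun y ↦ u (z, y) :=
    hu.comp measurable_prodMk_left
  rw [mul_right_comm, ← lintegral_mul_const _ (slice hf x)]
  refine hν ((slice hf x).mul_const _) (slice hg x') (slice hh _) fun y hy y' hy' ↦ ?_
  calc f (x, y) * ENNReal.ofReal (exp (-c x x')) * g (x', y') * ENNReal.ofReal (exp (-e y y'))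
      = f (x, y) * g (x', y') * ENNReal.ofReal (exp (-(c x x' + e y y'))) := by
        rw [neg_add, exp_add, ENNReal.ofReal_mul (exp_nonneg _)]
        ring
    _ ≤ h (midpoint ℝ x x', midpoint ℝ y y') ^ 2 := hfgh (x, y) ⟨hx, hy⟩ (x', y') ⟨hx', hy'⟩

theorem pi {n : ℕ} {E : Fin n → Type*} [∀ i, AddCommGroup (E i)] [∀ i, Module ℝ (E i)]
    [∀ i, MeasurableSpace (E i)] {μ : ∀ i, Measure (E i)} [∀ i, SigmaFinite (μ i)]
    {S : ∀ i, Set (E i)} {c : ∀ i, E i → E i → ℝ} (hμ : ∀ i, PrekopaLeindlerOn (μ i) (S i) (c i)) :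
    PrekopaLeindlerOn (Measure.pi μ) (univ.pi S) fun x y ↦ ∑ i, c i (x i) (y i) := by
  induction n with
  | zero =>
    intro f g h _ _ _ hfgh
    simpa [Measure.pi_of_empty μ isEmptyElim, mem_univ_pi] using
      hfgh isEmptyElim (by simp) isEmptyElim (by simp)
  | succ n ih =>
    convert ((hμ 0).prod (ih fun i ↦ hμ (Fin.succAbove 0 i))).comap_measurableEquiv
      (MeasurableEquiv.piFinSuccAbove E 0) (measurePreserving_piFinSuccAbove μ 0)
      (fun x y ↦ ?_) using 1
    · ext x
      exact mem_univ_pi.trans <| Fin.forall_fin_succ.trans <| and_congr_right' mem_univ_pi.symm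
    · ext x y
      exact Fin.sum_univ_succ _
    · rfl

lemma withDensity {w : E → ℝ≥0∞} (hμ : PrekopaLeindlerOn μ S c) (hw : Measurable w)
    (hw_zero : ∀ x ∈ S \ T, w x = 0)
    (hw_mid : ∀ x ∈ T, ∀ y ∈ T, w x * w y ≤
      ENNReal.ofReal (exp (-d x y)) * w (midpoint ℝ x y) ^ 2) :
    PrekopaLeindlerOn (μ.withDensity w) T fun x y ↦ c x y + d x y := by
  intro f g h hf hg hh hfgh
  simp only [lintegral_withDensity_eq_lintegral_mul μ hw, hf, hg, hh]
  refine hμ (hw.mul hf) (hw.mul hg) (hw.mul hh) fun x hx y hy ↦ ?_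
  by_cases hxT : x ∈ T; swap
  · simp [hw_zero x ⟨hx, hxT⟩]
  by_cases hyT : y ∈ T; swap
  · simp [hw_zero y ⟨hy, hyT⟩]
  set m := midpoint ℝ x y
  calc w x * f x * (w y * g y) * ENNReal.ofReal (exp (-c x y))
      = w x * w y * (f x * g y) * ENNReal.ofReal (exp (-c x y)) := by ring
    _ ≤ ENNReal.ofReal (exp (-d x y)) * w m ^ 2 * (f x * g y) * ENNReal.ofReal (exp (-c x y)) := by
        gcongr ?_ * _ * _
        exact hw_mid x hxT y hyT
    _ = w m ^ 2 * (f x * g y * ENNReal.ofReal (exp (-(c x y + d x y)))) := by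
        rw [neg_add, exp_add, ENNReal.ofReal_mul (exp_nonneg _)]
        ring
    _ ≤ w m ^ 2 * h m ^ 2 := by
        gcongr
        exact hfgh x hxT y hyT
    _ = (w m * h m) ^ 2 := (mul_pow ..).symm

lemma ae_mem (hμ : PrekopaLeindlerOn μ S c) (hS : MeasurableSet S) : ∀ᵐ x ∂μ, x ∈ S := by
  have hSc : Measurable (Sᶜ.indicator (1 : E → ℝ≥0∞)) := measurable_one.indicator hS.compl
  have hμS : μ Sᶜ = 0 := by
    simpa [lintegral_indicator_one hS.compl] using
      hμ hSc hSc measurable_zero fun x hx y _ ↦ by simp [hx]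
  exact hμS

end PrekopaLeindlerOn

end PrekopaLeindlerOn

/-! ### From exponential moments to variance -/

lemma one_add_sq_div_two_le_cosh (x : ℝ) : 1 + x ^ 2 / 2 ≤ cosh x := by
  have half_le_sinh : |x / 2| ≤ |sinh (x / 2)| := by
    rw [abs_sinh]
    exact self_le_sinh_iff.2 (abs_nonneg _)
  have cosh_eq : cosh x = 1 + 2 * sinh (x / 2) ^ 2 := by
    rw [← mul_div_cancel₀ x two_ne_zero, cosh_two_mul, cosh_sq]
    ring_nf
  linarith [sq_le_sq.2 half_le_sinh]

lemma cosh_mul_sub_eq (s x y : ℝ) : cosh (s * (x - y)) =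
    (exp (s * x) * exp (-s * y) + exp (-s * x) * exp (s * y)) / 2 := by
  rw [cosh_eq, ← exp_add, ← exp_add]
  ring_nf

section Variance

variable {Ω : Type*} [MeasurableSpace Ω] {μ : Measure Ω} {g Q : Ω → ℝ} {s : ℝ}

lemma integrable_cosh_mul_sub_prod [SFinite μ] (hs : s ∈ integrableExpSet g μ)
    (hs_neg : -s ∈ integrableExpSet g μ) :
    Integrable (fun p : Ω × Ω ↦ cosh (s * (g p.1 - g p.2))) (μ.prod μ) := by
  simp only [cosh_mul_sub_eq]
  exact ((hs.mul_prod hs_neg).add (hs_neg.mul_prod hs)).div_const 2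

lemma integral_cosh_mul_sub_prod [SFinite μ] (hs : s ∈ integrableExpSet g μ)
    (hs_neg : -s ∈ integrableExpSet g μ) :
    ∫ p, cosh (s * (g p.1 - g p.2)) ∂(μ.prod μ) = mgf g μ s * mgf g μ (-s) := by
  simp only [cosh_mul_sub_eq]
  rw [integral_div, integral_add (hs.mul_prod hs_neg) (hs_neg.mul_prod hs),
    integral_prod_mul (fun x ↦ exp (s * g x)) fun x ↦ exp (-s * g x),
    integral_prod_mul (fun x ↦ exp (-s * g x)) fun x ↦ exp (s * g x)]
  simp only [mgf]
  ring

lemma integrable_sub_sq_prod [IsFiniteMeasure μ] (hg : MemLp g 2 μ) :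
    Integrable (fun p : Ω × Ω ↦ (g p.1 - g p.2) ^ 2) (μ.prod μ) :=
  ((hg.comp_fst μ).sub (hg.comp_snd μ)).integrable_sq

variable [IsProbabilityMeasure μ]

lemma integral_sub_sq_prod_eq_two_mul_variance (hg : MemLp g 2 μ) :
    ∫ p, (g p.1 - g p.2) ^ 2 ∂(μ.prod μ) = 2 * Var[g; μ] := by
  have hg_int : Integrable g μ := hg.integrable one_le_two
  calc ∫ p, (g p.1 - g p.2) ^ 2 ∂(μ.prod μ)
      = ∫ p, (g p.1 ^ 2 + g p.2 ^ 2 - 2 * (g p.1 * g p.2)) ∂(μ.prod μ) := by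
        congr with p
        ring
    _ = ∫ x, g x ^ 2 ∂μ + ∫ x, g x ^ 2 ∂μ - 2 * ((∫ x, g x ∂μ) * ∫ x, g x ∂μ) := by
        rw [integral_sub (by exact (hg.integrable_sq.comp_fst μ).add (hg.integrable_sq.comp_snd μ))
            ((hg_int.mul_prod hg_int).const_mul 2),
          integral_add (hg.integrable_sq.comp_fst μ) (hg.integrable_sq.comp_snd μ),
          integral_const_mul, integral_prod_mul,
          integral_fun_fst (fun x ↦ g x ^ 2), integral_fun_snd (fun x ↦ g x ^ 2)]
        simp
    _ = 2 * Var[g; μ] := by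
        rw [variance_eq_sub hg]
        simp only [Pi.pow_apply]
        ring

lemma one_add_sq_mul_variance_le_mgf_mul_mgf_neg (hg : MemLp g 2 μ)
    (hs : s ∈ integrableExpSet g μ) (hs_neg : -s ∈ integrableExpSet g μ) :
    1 + s ^ 2 * Var[g; μ] ≤ mgf g μ s * mgf g μ (-s) := by
  calc 1 + s ^ 2 * Var[g; μ] = ∫ p, (1 + s ^ 2 / 2 * (g p.1 - g p.2) ^ 2) ∂(μ.prod μ) := by
        rw [integral_add (integrable_const _) ((integrable_sub_sq_prod hg).const_mul _),
          integral_const_mul, integral_sub_sq_prod_eq_two_mul_variance hg]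
        simp
        ring
    _ ≤ ∫ p, cosh (s * (g p.1 - g p.2)) ∂(μ.prod μ) := by
        refine integral_mono
          ((integrable_const _).add ((integrable_sub_sq_prod hg).const_mul _))
          (integrable_cosh_mul_sub_prod hs hs_neg) fun p ↦ ?_
        refine le_trans (le_of_eq ?_) (one_add_sq_div_two_le_cosh _)
        ring
    _ = mgf g μ s * mgf g μ (-s) := integral_cosh_mul_sub_prod hs hs_neg

lemma variance_le_two_mul_integral_of_mgf_mul_mgf_neg_le (hg : integrableExpSet g μ = univ)
    (hQ : 0 ∈ interior (integrableExpSet Q μ))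
    (h : ∀ s > 0, mgf g μ s * mgf g μ (-s) ≤ mgf Q μ (s ^ 2) ^ 2) :
    Var[g; μ] ≤ 2 * ∫ x, Q x ∂μ := by
  have hg_memLp : MemLp g 2 μ := memLp_of_mem_interior_integrableExpSet (by simp [hg]) 2
  have hderiv : HasDerivAt (fun t ↦ mgf Q μ t ^ 2) (2 * ∫ x, Q x ∂μ) 0 := by
    simpa using (hasDerivAt_mgf hQ).fun_pow 2
  refine ge_of_tendsto hderiv.tendsto_slope_zero_right ?_
  filter_upwards [self_mem_nhdsWithin] with t (ht : 0 < t)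
  have one_add_le : 1 + t * Var[g; μ] ≤ mgf Q μ t ^ 2 := by
    simpa only [sq_sqrt ht.le] using
      (one_add_sq_mul_variance_le_mgf_mul_mgf_neg (s := √t) hg_memLp (by simp [hg])
        (by simp [hg])).trans (h _ (sqrt_pos.2 ht))
  rw [smul_eq_mul, zero_add, mgf_zero, one_pow, le_inv_mul_iff₀ ht]
  linarith

end Variance

lemma tendsto_variance_of_dominated_convergence {Ω : Type*} [MeasurableSpace Ω] {μ : Measure Ω}
    [IsProbabilityMeasure μ] {F : ℕ → Ω → ℝ} {f bound : Ω → ℝ}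
    (hF : ∀ n, AEStronglyMeasurable (F n) μ) (hbound : MemLp bound 2 μ)
    (hF_le : ∀ n, ∀ᵐ x ∂μ, ‖F n x‖ ≤ bound x)
    (hF_tendsto : ∀ᵐ x ∂μ, Tendsto (F · x) atTop (𝓝 (f x))) :
    Tendsto (fun n ↦ Var[F n; μ]) atTop (𝓝 Var[f; μ]) := by
  have hF_memLp (n) : MemLp (F n) 2 μ :=
    hbound.mono' (hF n) (hF_le n)
  have hf_memLp : MemLp f 2 μ := by
    refine hbound.mono' (aestronglyMeasurable_of_tendsto_ae atTop hF hF_tendsto) ?_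
    filter_upwards [hF_tendsto, ae_all_iff.2 hF_le] with x hx hx_le
    exact le_of_tendsto' hx.norm hx_le
  simp only [variance_eq_sub (hF_memLp _), variance_eq_sub hf_memLp]
  refine Tendsto.sub ?_ (Tendsto.pow ?_ 2)
  · refine tendsto_integral_of_dominated_convergence (fun x ↦ bound x ^ 2)
      (fun n ↦ (hF n).pow 2) hbound.integrable_sq (fun n ↦ ?_) ?_
    · filter_upwards [hF_le n] with x hx
      simpa only [Pi.pow_apply, norm_pow] using pow_le_pow_left₀ (norm_nonneg _) hx 2
    · filter_upwards [hF_tendsto] with x hx using hx.pow 2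
  · exact tendsto_integral_of_dominated_convergence bound hF (hbound.integrable one_le_two) hF_le
      hF_tendsto

namespace PrekopaLeindlerOn

variable {E : Type*} [AddCommGroup E] [Module ℝ E] [MeasurableSpace E] {μ : Measure E}
  [IsProbabilityMeasure μ] {S : Set E} {c : E → E → ℝ}

theorem variance_le (hμ : PrekopaLeindlerOn μ S c) {g Q : E → ℝ} (hg : Measurable g)
    (hQ : Measurable Q) (hg_exp : integrableExpSet g μ = univ)
    (hQ_exp : integrableExpSet Q μ = univ)
    (hgQ : ∀ s > 0, ∀ x ∈ S, ∀ y ∈ S,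
      s * (g x - g y) ≤ c x y + 2 * s ^ 2 * Q (midpoint ℝ x y)) :
    Var[g; μ] ≤ 2 * ∫ x, Q x ∂μ := by
  refine variance_le_two_mul_integral_of_mgf_mul_mgf_neg_le hg_exp (by simp [hQ_exp])
    fun s hs ↦ ?_
  have ofReal_mgf {u : E → ℝ} (hu : integrableExpSet u μ = univ) (t : ℝ) :
      ENNReal.ofReal (mgf u μ t) = ∫⁻ x, ENNReal.ofReal (exp (t * u x)) ∂μ :=
    ofReal_integral_eq_lintegral_ofReal (hu.ge (mem_univ t)) (ae_of_all _ fun _ ↦ exp_nonneg _)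
  rw [← ENNReal.ofReal_le_ofReal_iff (sq_nonneg _), ENNReal.ofReal_mul mgf_nonneg,
    ENNReal.ofReal_pow mgf_nonneg, ofReal_mgf hg_exp, ofReal_mgf hg_exp, ofReal_mgf hQ_exp]
  refine hμ (by fun_prop) (by fun_prop) (by fun_prop) fun x hx y hy ↦ ?_
  rw [← ENNReal.ofReal_mul (exp_nonneg _), ← ENNReal.ofReal_mul (by positivity),
    ← ENNReal.ofReal_pow (exp_nonneg _), ← exp_add, ← exp_add, ← exp_nat_mul]
  refine ENNReal.ofReal_le_ofReal (exp_le_exp.2 ?_)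
  push_cast
  linarith [hgQ s hs x hx y hy]

lemma lintegral_le_lintegral_sq (hμ : PrekopaLeindlerOn μ S c)
    (hc : ∀ x ∈ S, ∀ y ∈ S, 0 ≤ c x y) {f h : E → ℝ≥0∞} (hf : Measurable f) (hh : Measurable h)
    (hfh : ∀ x ∈ S, ∀ y ∈ S, f x ≤ h (midpoint ℝ x y) ^ 2) :
    ∫⁻ x, f x ∂μ ≤ (∫⁻ x, h x ∂μ) ^ 2 := by
  have exp_neg_le_one {x y : E} (hx : x ∈ S) (hy : y ∈ S) : ENNReal.ofReal (exp (-c x y)) ≤ 1 := by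
    simpa using hc x hx y hy
  simpa using hμ hf measurable_one hh fun x hx y hy ↦ by
    simpa using mul_le_mul' (hfh x hx y hy) (exp_neg_le_one hx hy)

end PrekopaLeindlerOn

/-! ### Estimates in the relative difference `(u - v) / (u + v)` -/

section RelativeDifference

variable {p u v : ℝ}

lemma one_add_rpow_sub_one_sub_rpow_le (hp : 1 ≤ p) {ρ : ℝ} (hρ₀ : 0 ≤ ρ) (hρ₁ : ρ ≤ 1) :
    (1 + ρ) ^ p - (1 - ρ) ^ p ≤ (2 ^ p + p) * ρ := by
  have chord : (1 + ρ) ^ p ≤ (1 - ρ) * 1 ^ p + ρ * 2 ^ p := by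
    have combination : (1 - ρ) * 1 + ρ * 2 = 1 + ρ := by ring
    simpa only [smul_eq_mul, combination] using
      (convexOn_rpow hp).2 (mem_Ici.2 zero_le_one) (mem_Ici.2 zero_le_two) (sub_nonneg.2 hρ₁) hρ₀
        (sub_add_cancel 1 ρ)
  have bernoulli : 1 + p * -ρ ≤ (1 + -ρ) ^ p := one_add_mul_self_le_rpow_one_add (by linarith) hp
  rw [one_rpow] at chord
  rw [← sub_eq_add_neg] at bernoulli
  linarith

lemma midpoint_mul_one_add_sub_div_add (h : u + v ≠ 0) :
    midpoint ℝ u v * (1 + (u - v) / (u + v)) = u := by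
  rw [midpoint_eq_smul_add, smul_eq_mul, invOf_eq_inv]
  field_simp
  ring

lemma midpoint_mul_one_sub_sub_div_add (h : u + v ≠ 0) :
    midpoint ℝ u v * (1 - (u - v) / (u + v)) = v := by
  rw [midpoint_eq_smul_add, smul_eq_mul, invOf_eq_inv]
  field_simp
  ring

lemma midpoint_pos (hu : 0 < u) (hv : 0 < v) : 0 < midpoint ℝ u v := by
  rw [midpoint_eq_smul_add, smul_eq_mul, invOf_eq_inv]
  positivity

lemma min_rpow_sub_min_rpow_le (hp : 1 ≤ p) {N : ℝ} (hN : 0 ≤ N) (hu : 0 < u) (hv : 0 < v) :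
    min (u ^ p) N - min (v ^ p) N ≤
      (2 ^ p + p) * |(u - v) / (u + v)| * min (midpoint ℝ u v ^ p) N := by
  have hm := midpoint_pos hu hv
  have hmin : 0 ≤ min (midpoint ℝ u v ^ p) N := le_min (rpow_nonneg hm.le p) hN
  rcases le_total u v with huv | hvu
  · have hpow : u ^ p ≤ v ^ p := rpow_le_rpow hu.le huv (by linarith)
    calc min (u ^ p) N - min (v ^ p) N ≤ 0 := sub_nonpos.2 (min_le_min_right N hpow)
      _ ≤ _ := by positivity
  have hu_eq := midpoint_mul_one_add_sub_div_add (add_pos hu hv).ne'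
  have hv_eq := midpoint_mul_one_sub_sub_div_add (add_pos hu hv).ne'
  set m := midpoint ℝ u v
  set ρ := (u - v) / (u + v)
  have hρ₀ : 0 ≤ ρ := div_nonneg (sub_nonneg.2 hvu) (add_pos hu hv).le
  have hρ₁ : ρ ≤ 1 := div_le_one_of_le₀ (by linarith) (add_pos hu hv).le
  have upper : min (u ^ p) N ≤ (1 + ρ) ^ p * min (m ^ p) N := by
    rw [← hu_eq, mul_rpow hm.le (by linarith), mul_comm, mul_min_of_nonneg _ _ (by positivity)]
    exact min_le_min_left _ (le_mul_of_one_le_left hN (one_le_rpow (by linarith) (by linarith)))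
  have lower : (1 - ρ) ^ p * min (m ^ p) N ≤ min (v ^ p) N := by
    have h_nonneg : 0 ≤ 1 - ρ := sub_nonneg.2 hρ₁
    rw [← hv_eq, mul_rpow hm.le h_nonneg, mul_comm (m ^ p), mul_min_of_nonneg _ _ (by positivity)]
    exact min_le_min_left _
      (mul_le_of_le_one_left hN (rpow_le_one h_nonneg (by linarith) (by linarith)))
  calc min (u ^ p) N - min (v ^ p) N
      ≤ ((1 + ρ) ^ p - (1 - ρ) ^ p) * min (m ^ p) N := by linarith
    _ ≤ (2 ^ p + p) * ρ * min (m ^ p) N := by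
        gcongr
        exact one_add_rpow_sub_one_sub_rpow_le hp hρ₀ hρ₁
    _ = (2 ^ p + p) * |ρ| * min (m ^ p) N := by rw [abs_of_nonneg hρ₀]

lemma mul_min_rpow_sub_min_rpow_le (hp : 1 ≤ p) {N : ℝ} (hN : 0 ≤ N) {ε b : ℝ} (hε : 0 < ε)
    (hb : 0 ≤ b) (hu : 0 < u) (hv : 0 < v) :
    b * (min (u ^ p) N - min (v ^ p) N) ≤ ε * ((u - v) / (u + v)) ^ 2 +
      (2 ^ p + p) ^ 2 / (4 * ε) * (b * min (midpoint ℝ u v ^ p) N) ^ 2 := by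
  set ρ := (u - v) / (u + v)
  set k := min (midpoint ℝ u v ^ p) N
  set L := 2 ^ p + p
  have amgm : L * |ρ| * (b * k) ≤ ε * ρ ^ 2 + L ^ 2 / (4 * ε) * (b * k) ^ 2 := by
    rw [← sq_abs ρ, ← sub_nonneg]
    have complete_sq : ε * |ρ| ^ 2 + L ^ 2 / (4 * ε) * (b * k) ^ 2 - L * |ρ| * (b * k) =
        (2 * ε * |ρ| - L * (b * k)) ^ 2 / (4 * ε) := by
      field_simp
      ring
    rw [complete_sq]
    positivity
  calc b * (min (u ^ p) N - min (v ^ p) N) ≤ b * (L * |ρ| * k) := by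
        gcongr
        exact min_rpow_sub_min_rpow_le hp hN hu hv
    _ = L * |ρ| * (b * k) := by ring
    _ ≤ _ := amgm

lemma rpow_mul_rpow_le_exp_mul_midpoint_rpow_sq {q : ℝ} (hq : 0 ≤ q) (hu : 0 < u) (hv : 0 < v) :
    u ^ q * v ^ q ≤ exp (-(q * ((u - v) / (u + v)) ^ 2)) * (midpoint ℝ u v ^ q) ^ 2 := by
  have hm := midpoint_pos hu hv
  have huv : u * v ≤ exp (-((u - v) / (u + v)) ^ 2) * midpoint ℝ u v ^ 2 := by
    have hu_eq := midpoint_mul_one_add_sub_div_add (add_pos hu hv).ne'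
    have hv_eq := midpoint_mul_one_sub_sub_div_add (add_pos hu hv).ne'
    set m := midpoint ℝ u v
    set ρ := (u - v) / (u + v)
    calc u * v = (1 - ρ ^ 2) * m ^ 2 := by
          rw [← hu_eq, ← hv_eq]
          ring
      _ ≤ exp (-ρ ^ 2) * m ^ 2 := by
          gcongr
          exact one_sub_le_exp_neg _
  calc u ^ q * v ^ q = (u * v) ^ q := (mul_rpow hu.le hv.le).symm
    _ ≤ (exp (-((u - v) / (u + v)) ^ 2) * midpoint ℝ u v ^ 2) ^ q := by gcongr
    _ = exp (-(q * ((u - v) / (u + v)) ^ 2)) * (midpoint ℝ u v ^ q) ^ 2 := by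
        rw [mul_rpow (exp_nonneg _) (sq_nonneg _), ← exp_mul, ← rpow_natCast_mul hm.le,
          ← rpow_mul_natCast hm.le, mul_comm q (2 : ℕ)]
        ring_nf

end RelativeDifference

/-! ### Root coordinates -/

section RootCoordinates

variable {κ : ℝ} {n : ℕ}

lemma lintegral_comp_abs (f : ℝ → ℝ≥0∞) : ∫⁻ x, f |x| = 2 * ∫⁻ x in Ioi 0, f x := by
  have pos_half : ∫⁻ x in Ioi 0, f |x| = ∫⁻ x in Ioi 0, f x :=
    setLIntegral_congr_fun measurableSet_Ioi fun x hx ↦ by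
      simp only [abs_of_pos (mem_Ioi.1 hx)]
  have neg_half : ∫⁻ x in Iic 0, f |x| = ∫⁻ x in Ioi 0, f |x| := by
    simpa [← restrict_Iio_eq_restrict_Iic] using
      (Measure.measurePreserving_neg (volume : Measure ℝ)).setLIntegral_comp_preimage_emb
        (MeasurableEquiv.neg ℝ).measurableEmbedding (fun x ↦ f |x|) (Ioi 0)
  rw [← lintegral_add_compl _ (measurableSet_Ioi (a := 0)), compl_Ioi, neg_half, pos_half, two_mul]

lemma lintegral_Ioi_eq_lintegral_comp_rpow (hκ : 0 < κ) (f : ℝ → ℝ≥0∞) :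
    ∫⁻ x in Ioi 0, f x = ∫⁻ u in Ioi 0, ENNReal.ofReal (κ * u ^ (κ - 1)) * f (u ^ κ) := by
  have image_rpow : (fun u : ℝ ↦ u ^ κ) '' Ioi 0 = Ioi 0 :=
    Subset.antisymm (image_subset_iff.2 fun u hu ↦ rpow_pos_of_pos hu κ) fun x hx ↦
      ⟨x ^ κ⁻¹, rpow_pos_of_pos hx _, rpow_inv_rpow (le_of_lt hx) hκ.ne'⟩
  conv_lhs => rw [← image_rpow]
  rw [lintegral_image_eq_lintegral_abs_deriv_mul measurableSet_Ioi
    (fun u hu ↦ (hasDerivAt_rpow_const (.inl (ne_of_gt hu))).hasDerivWithinAt)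
    fun u hu v hv huv ↦ (rpow_left_inj (le_of_lt hu) (le_of_lt hv) hκ.ne').1 huv]
  refine setLIntegral_congr_fun measurableSet_Ioi fun u (hu : 0 < u) ↦ ?_
  simp only [abs_of_nonneg (show 0 ≤ κ * u ^ (κ - 1) by positivity)]

/-- The density of `|x| ^ κ⁻¹` when `x` has Lebesgue law on the line. -/
noncomputable def rootDensity (κ : ℝ) : ℝ → ℝ≥0∞ :=
  (Ioi 0).indicator fun u ↦ ENNReal.ofReal (2 * κ * u ^ (κ - 1))

lemma measurable_rootDensity (κ : ℝ) : Measurable (rootDensity κ) :=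
  Measurable.indicator (by fun_prop) measurableSet_Ioi

theorem map_abs_rpow_inv_volume (hκ : 0 < κ) :
    (volume : Measure ℝ).map (fun x ↦ |x| ^ κ⁻¹) = volume.withDensity (rootDensity κ) := by
  refine Measure.ext_of_lintegral _ fun f hf ↦ ?_
  rw [lintegral_map hf (by fun_prop), lintegral_comp_abs fun x ↦ f (x ^ κ⁻¹),
    lintegral_Ioi_eq_lintegral_comp_rpow hκ, ← lintegral_const_mul' _ _ (by finiteness),
    lintegral_withDensity_eq_lintegral_mul _ (measurable_rootDensity κ) hf,
    ← lintegral_indicator measurableSet_Ioi]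
  refine lintegral_congr fun u ↦ ?_
  by_cases hu : u ∈ Ioi 0
  · simp only [rootDensity, Pi.mul_apply, indicator_of_mem hu, rpow_rpow_inv (le_of_lt hu) hκ.ne',
      ← mul_assoc, ENNReal.ofReal_mul zero_le_two, ENNReal.ofReal_mul hκ.le,
      ENNReal.ofReal_mul (mul_nonneg zero_le_two hκ.le), ENNReal.ofReal_ofNat]
  · simp [rootDensity, hu]

/-- The root coordinates `|x i| ^ κ⁻¹`, in which the potential becomes convex. -/
noncomputable def rootCoord (κ : ℝ) (x : Fin n → ℝ) : Fin n → ℝ := fun i ↦ |x i| ^ κ⁻¹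

lemma measurable_rootCoord (κ : ℝ) : Measurable (rootCoord κ : (Fin n → ℝ) → Fin n → ℝ) := by
  unfold rootCoord
  fun_prop

/-- The cost measuring the strict log-concavity of Lebesgue measure in root coordinates. -/
noncomputable def rootCost (κ : ℝ) (u v : Fin n → ℝ) : ℝ :=
  ∑ i, (κ - 1) * ((u i - v i) / (u i + v i)) ^ 2

lemma rootCost_nonneg (hκ : 1 ≤ κ) (u v : Fin n → ℝ) : 0 ≤ rootCost κ u v :=
  Finset.sum_nonneg fun _ _ ↦ mul_nonneg (sub_nonneg.2 hκ) (sq_nonneg _)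

/-- The open positive orthant of `ℝⁿ`. -/
def openOrthant (n : ℕ) : Set (Fin n → ℝ) := univ.pi fun _ ↦ Ioi 0

lemma mem_openOrthant {x : Fin n → ℝ} : x ∈ openOrthant n ↔ ∀ i, 0 < x i := by
  simp [openOrthant]

lemma isOpen_openOrthant (n : ℕ) : IsOpen (openOrthant n) :=
  isOpen_set_pi finite_univ fun _ _ ↦ isOpen_Ioi

lemma convex_openOrthant (n : ℕ) : Convex ℝ (openOrthant n) :=
  convex_pi fun _ _ ↦ convex_Ioi 0

lemma prekopaLeindlerOn_withDensity_rootDensity (hκ : 1 ≤ κ) :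
    PrekopaLeindlerOn ((volume : Measure ℝ).withDensity (rootDensity κ)) (Ioi 0)
      fun u v ↦ (κ - 1) * ((u - v) / (u + v)) ^ 2 := by
  simpa only [Pi.zero_apply, zero_add] using
    PrekopaLeindlerOn.volume_real.withDensity (T := Ioi 0)
      (d := fun u v ↦ (κ - 1) * ((u - v) / (u + v)) ^ 2) (measurable_rootDensity κ)
      (fun u hu ↦ indicator_of_notMem hu.2 _) fun u (hu : 0 < u) v (hv : 0 < v) ↦ by
        have hm := midpoint_pos hu hv
        have : 0 ≤ κ := zero_le_one.trans hκ
        simp only [rootDensity, indicator_of_mem (mem_Ioi.2 hu), indicator_of_mem (mem_Ioi.2 hv),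
          indicator_of_mem (mem_Ioi.2 hm)]
        rw [← ENNReal.ofReal_mul (by positivity), ← ENNReal.ofReal_pow (by positivity),
          ← ENNReal.ofReal_mul (exp_nonneg _)]
        refine ENNReal.ofReal_le_ofReal ?_
        calc 2 * κ * u ^ (κ - 1) * (2 * κ * v ^ (κ - 1))
            = (2 * κ) ^ 2 * (u ^ (κ - 1) * v ^ (κ - 1)) := by ring
          _ ≤ (2 * κ) ^ 2 * (exp (-((κ - 1) * ((u - v) / (u + v)) ^ 2)) *
                (midpoint ℝ u v ^ (κ - 1)) ^ 2) := by
              gcongr (2 * κ) ^ 2 * ?_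
              exact rpow_mul_rpow_le_exp_mul_midpoint_rpow_sq (sub_nonneg.2 hκ) hu hv
          _ = _ := by ring

theorem prekopaLeindlerOn_map_rootCoord (hκ : 1 ≤ κ) :
    PrekopaLeindlerOn ((volume : Measure (Fin n → ℝ)).map (rootCoord κ)) (openOrthant n)
      (rootCost κ) := by
  have hmap := map_abs_rpow_inv_volume (zero_lt_one.trans_le hκ)
  have : SigmaFinite ((volume : Measure ℝ).map fun x ↦ |x| ^ κ⁻¹) := by
    rw [hmap, rootDensity, withDensity_indicator measurableSet_Ioi]
    exact SigmaFinite.withDensity_ofReal _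
  have map_pi : (volume : Measure (Fin n → ℝ)).map (rootCoord κ) =
      Measure.pi fun _ ↦ (volume : Measure ℝ).map fun x ↦ |x| ^ κ⁻¹ :=
    Measure.pi_map_pi (μ := fun _ ↦ volume) (f := fun _ x ↦ |x| ^ κ⁻¹) fun _ ↦ by fun_prop
  have line := prekopaLeindlerOn_withDensity_rootDensity hκ
  rw [← hmap] at line
  rw [map_pi]
  exact .pi fun _ ↦ line

end RootCoordinates

lemma map_withDensity_comp {α β : Type*} [MeasurableSpace α] [MeasurableSpace β] (μ : Measure α)
    {T : α → β} (hT : Measurable T) {ψ : β → ℝ≥0∞} (hψ : Measurable ψ) :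
    (μ.withDensity (ψ ∘ T)).map T = (μ.map T).withDensity ψ := by
  refine Measure.ext_of_lintegral _ fun f hf ↦ ?_
  rw [lintegral_map hf hT,
    lintegral_withDensity_eq_lintegral_mul (g := fun x ↦ f (T x)) _ (hψ.comp hT) (hf.comp hT),
    lintegral_withDensity_eq_lintegral_mul _ hψ hf, lintegral_map (hψ.mul hf) hT]
  rfl

section ExpNeg

variable {E : Type*} [NormedAddCommGroup E] [NormedSpace ℝ E] [MeasurableSpace E] [BorelSpace E]
  [FiniteDimensional ℝ E] {S : Set E} {V : E → ℝ}

lemma measurable_indicator_exp_neg_of_convexOn (hS : IsOpen S)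
    (hV : ConvexOn ℝ S V) : Measurable (S.indicator fun x ↦ ENNReal.ofReal (exp (-V x))) := by
  classical
  rw [← piecewise_eq_indicator]
  refine ContinuousOn.measurable_piecewise ?_ continuousOn_const hS.measurableSet
  exact ENNReal.continuous_ofReal.comp_continuousOn (hV.continuousOn hS).neg.rexp

lemma PrekopaLeindlerOn.withDensity_indicator_exp_neg {μ : Measure E}
    {c : E → E → ℝ} (hμ : PrekopaLeindlerOn μ S c) (hS : IsOpen S) (hV : ConvexOn ℝ S V) :
    PrekopaLeindlerOn (μ.withDensity (S.indicator fun x ↦ ENNReal.ofReal (exp (-V x)))) S c := by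
  have hVmid {x y : E} (hx : x ∈ S) (hy : y ∈ S) : 2 * V (midpoint ℝ x y) ≤ V x + V y := by
    have half : (0 : ℝ) ≤ 2⁻¹ := by norm_num
    have hV_half := hV.2 hx hy half half (by norm_num)
    rw [smul_eq_mul, smul_eq_mul] at hV_half
    rw [midpoint_eq_smul_add, smul_add, invOf_eq_inv]
    linarith
  simpa only [Pi.zero_apply, add_zero] using hμ.withDensity (T := S) (d := 0)
    (measurable_indicator_exp_neg_of_convexOn hS hV) (by simp) fun x hx y hy ↦ by
      have hmid : midpoint ℝ x y ∈ S := hV.1.midpoint_mem hx hy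
      simp only [indicator_of_mem hx, indicator_of_mem hy, indicator_of_mem hmid]
      rw [Pi.zero_apply, Pi.zero_apply, neg_zero, exp_zero, ENNReal.ofReal_one, one_mul,
        ← ENNReal.ofReal_mul (exp_nonneg _), ← ENNReal.ofReal_pow (exp_nonneg _), ← exp_add,
        ← exp_nat_mul]
      refine ENNReal.ofReal_le_ofReal (exp_le_exp.2 ?_)
      push_cast
      linarith [hVmid hx hy]

end ExpNeg

section RootLaw

variable {κ : ℝ} {n : ℕ} {φ : (Fin n → ℝ) → ℝ}

lemma apply_abs_eq_of_unconditional
    (hφ : ∀ ε : Fin n → ℝ, (∀ i, ε i = 1 ∨ ε i = -1) → ∀ x, φ (fun i ↦ ε i * x i) = φ x)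
    (x : Fin n → ℝ) : φ (fun i ↦ |x i|) = φ x := by
  have abs_eq : (fun i ↦ |x i|) = fun i ↦ (if 0 ≤ x i then 1 else -1) * x i := by
    ext i
    split_ifs with hi
    · rw [abs_of_nonneg hi, one_mul]
    · rw [abs_of_neg (not_le.1 hi), neg_one_mul]
  rw [abs_eq]
  refine hφ _ (fun i ↦ ?_) x
  split_ifs <;> simp

lemma ae_rootCoord_mem_openOrthant (κ : ℝ) :
    ∀ᵐ x : Fin n → ℝ, rootCoord κ x ∈ openOrthant n := by
  have ae_ne_zero : ∀ᵐ x : Fin n → ℝ, ∀ i, x i ≠ 0 :=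
    ae_all_iff.2 fun i ↦ Measure.ae_eval_ne (fun _ ↦ (volume : Measure ℝ)) i 0
  filter_upwards [ae_ne_zero] with x hx
  exact mem_openOrthant.2 fun i ↦ rpow_pos_of_pos (abs_pos.2 (hx i)) _

lemma rootCoord_rpow (hκ : κ ≠ 0) (x : Fin n → ℝ) (i : Fin n) : rootCoord κ x i ^ κ = |x i| :=
  rpow_inv_rpow (abs_nonneg _) hκ

theorem prekopaLeindlerOn_map_rootCoord_withDensity (hκ : 1 ≤ κ)
    (hφ : ∀ ε : Fin n → ℝ, (∀ i, ε i = 1 ∨ ε i = -1) → ∀ x, φ (fun i ↦ ε i * x i) = φ x)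
    (hφ_conv : ConvexOn ℝ {x : Fin n → ℝ | ∀ i, 0 ≤ x i} fun x ↦ φ fun i ↦ x i ^ κ) :
    PrekopaLeindlerOn
      ((volume.withDensity fun x ↦ ENNReal.ofReal (exp (-φ x))).map (rootCoord κ))
      (openOrthant n) (rootCost κ) := by
  set ψ := (openOrthant n).indicator fun u ↦ ENNReal.ofReal (exp (-φ fun i ↦ u i ^ κ)) with hψ
  have conv : ConvexOn ℝ (openOrthant n) fun u ↦ φ fun i ↦ u i ^ κ :=
    hφ_conv.subset (fun u hu i ↦ (mem_openOrthant.1 hu i).le) (convex_openOrthant n)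
  have ψ_measurable : Measurable ψ :=
    measurable_indicator_exp_neg_of_convexOn (isOpen_openOrthant n) conv
  have density_eq : (fun x ↦ ENNReal.ofReal (exp (-φ x))) =ᵐ[volume] ψ ∘ rootCoord κ := by
    filter_upwards [ae_rootCoord_mem_openOrthant κ] with x hx
    rw [Function.comp_apply, hψ, indicator_of_mem hx]
    simp only [rootCoord_rpow (zero_lt_one.trans_le hκ).ne', apply_abs_eq_of_unconditional hφ x]
  rw [withDensity_congr_ae density_eq, map_withDensity_comp _ (measurable_rootCoord κ) ψ_measurable]
  exact (prekopaLeindlerOn_map_rootCoord hκ).withDensity_indicator_exp_neg (isOpen_openOrthant n)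
    conv

end RootLaw

/-! ### Moments in root coordinates -/

lemma integrableExpSet_eq_univ_of_ae_mem_Icc {Ω : Type*} [MeasurableSpace Ω] {μ : Measure Ω}
    [IsFiniteMeasure μ] {g : Ω → ℝ} {a b : ℝ} (hg : AEMeasurable g μ)
    (hg_mem : ∀ᵐ x ∂μ, g x ∈ Icc a b) : integrableExpSet g μ = univ :=
  eq_univ_of_forall fun _ ↦ integrable_exp_mul_of_mem_Icc hg hg_mem

section RootMoments

variable {κ p : ℝ} {n : ℕ} {μ : Measure (Fin n → ℝ)} {b : Fin n → ℝ}
  {c : (Fin n → ℝ) → (Fin n → ℝ) → ℝ}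

lemma ae_rpow_nonneg (hμ : PrekopaLeindlerOn μ (openOrthant n) c) (p : ℝ) :
    ∀ᵐ u ∂μ, ∀ j, 0 ≤ u j ^ p := by
  filter_upwards [hμ.ae_mem (isOpen_openOrthant n).measurableSet] with u hu j
  exact rpow_nonneg (mem_openOrthant.1 hu j).le p

lemma ae_mul_min_rpow_mem_Icc (hμ : PrekopaLeindlerOn μ (openOrthant n) c)
    (hb : ∀ j, 0 ≤ b j) {N : ℝ} (hN : 0 ≤ N) :
    ∀ᵐ u ∂μ, ∀ j, b j * min (u j ^ p) N ∈ Icc 0 (b j * u j ^ p) := by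
  filter_upwards [ae_rpow_nonneg hμ p] with u hu j
  exact ⟨mul_nonneg (hb j) (le_min (hu j) hN),
    mul_le_mul_of_nonneg_left (min_le_left _ _) (hb j)⟩

lemma mul_sum_min_rpow_sub_le_rootCost_add (hκ : 1 < κ) (hp : 1 ≤ p) (hb : ∀ j, 0 ≤ b j)
    {N : ℝ} (hN : 0 ≤ N) {s : ℝ} (hs : 0 < s) {u v : Fin n → ℝ} (hu : u ∈ openOrthant n)
    (hv : v ∈ openOrthant n) :
    s * (∑ j, b j * min (u j ^ p) N - ∑ j, b j * min (v j ^ p) N) ≤ rootCost κ u v +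
      2 * s ^ 2 * ((2 ^ p + p) ^ 2 / (4 * (κ - 1)) / 2 *
        ∑ j, (b j * min (midpoint ℝ u v j ^ p) N) ^ 2) := by
  simp only [rootCost, pi_midpoint_apply]
  rw [← Finset.sum_sub_distrib, Finset.mul_sum, ← mul_assoc, Finset.mul_sum,
    ← Finset.sum_add_distrib]
  refine Finset.sum_le_sum fun j _ ↦ ?_
  linear_combination mul_min_rpow_sub_min_rpow_le hp hN (sub_pos.2 hκ) (mul_nonneg hs.le (hb j))
    (mem_openOrthant.1 hu j) (mem_openOrthant.1 hv j)

variable [IsProbabilityMeasure μ]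

lemma lintegral_rpow_sq_le (hμ : PrekopaLeindlerOn μ (openOrthant n) c)
    (hc : ∀ u ∈ openOrthant n, ∀ v ∈ openOrthant n, 0 ≤ c u v) (hp : 0 ≤ p) (j : Fin n) :
    ∫⁻ u, ENNReal.ofReal (u j ^ p) ^ 2 ∂μ ≤ (∫⁻ u, ENNReal.ofReal (2 ^ p * u j ^ p) ∂μ) ^ 2 := by
  refine hμ.lintegral_le_lintegral_sq hc (by fun_prop)
    (by fun_prop) fun u hu v hv ↦ ?_
  have huj := mem_openOrthant.1 hu j
  have hvj := mem_openOrthant.1 hv j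
  have hm := midpoint_pos huj hvj
  rw [pi_midpoint_apply, ← mul_rpow zero_le_two hm.le]
  gcongr
  rw [midpoint_eq_smul_add, smul_eq_mul, invOf_eq_inv]
  linarith

lemma lintegral_ofReal_rpow_sq_le (hμ : PrekopaLeindlerOn μ (openOrthant n) c)
    (hc : ∀ u ∈ openOrthant n, ∀ v ∈ openOrthant n, 0 ≤ c u v) (hp : 0 ≤ p) {j : Fin n}
    (hint : Integrable (fun u ↦ u j ^ p) μ) :
    ∫⁻ u, ENNReal.ofReal ((u j ^ p) ^ 2) ∂μ ≤ ENNReal.ofReal ((2 ^ p * ∫ u, u j ^ p ∂μ) ^ 2) := by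
  have rpow_nonneg_ae : ∀ᵐ u ∂μ, 0 ≤ u j ^ p := (ae_rpow_nonneg hμ p).mono fun u hu ↦ hu j
  calc ∫⁻ u, ENNReal.ofReal ((u j ^ p) ^ 2) ∂μ = ∫⁻ u, ENNReal.ofReal (u j ^ p) ^ 2 ∂μ :=
        lintegral_congr_ae <| rpow_nonneg_ae.mono fun u hu ↦ ENNReal.ofReal_pow hu 2
    _ ≤ (∫⁻ u, ENNReal.ofReal (2 ^ p * u j ^ p) ∂μ) ^ 2 := lintegral_rpow_sq_le hμ hc hp j
    _ = ENNReal.ofReal ((2 ^ p * ∫ u, u j ^ p ∂μ) ^ 2) := by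
        rw [← ofReal_integral_eq_lintegral_ofReal (hint.const_mul _)
            (rpow_nonneg_ae.mono fun u hu ↦ mul_nonneg (by positivity) hu),
          integral_const_mul, ENNReal.ofReal_pow]
        exact mul_nonneg (by positivity) (integral_nonneg_of_ae rpow_nonneg_ae)

lemma memLp_rpow (hμ : PrekopaLeindlerOn μ (openOrthant n) c)
    (hc : ∀ u ∈ openOrthant n, ∀ v ∈ openOrthant n, 0 ≤ c u v) (hp : 0 ≤ p) {j : Fin n}
    (hint : Integrable (fun u ↦ u j ^ p) μ) :
    MemLp (fun u ↦ u j ^ p) 2 μ := by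
  rw [memLp_two_iff_integrable_sq hint.aestronglyMeasurable,
    ← lintegral_ofReal_ne_top_iff_integrable
      (by exact hint.aestronglyMeasurable.pow 2) (ae_of_all _ fun _ ↦ sq_nonneg _)]
  exact ((lintegral_ofReal_rpow_sq_le hμ hc hp hint).trans_lt ENNReal.ofReal_lt_top).ne

lemma integral_rpow_sq_le (hμ : PrekopaLeindlerOn μ (openOrthant n) c)
    (hc : ∀ u ∈ openOrthant n, ∀ v ∈ openOrthant n, 0 ≤ c u v) (hp : 0 ≤ p) {j : Fin n}
    (hint : Integrable (fun u ↦ u j ^ p) μ) :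
    ∫ u, (u j ^ p) ^ 2 ∂μ ≤ (2 ^ p * ∫ u, u j ^ p ∂μ) ^ 2 := by
  rw [← ENNReal.ofReal_le_ofReal_iff (sq_nonneg _), ofReal_integral_eq_lintegral_ofReal
    (memLp_rpow hμ hc hp hint).integrable_sq (ae_of_all _ fun _ ↦ sq_nonneg _)]
  exact lintegral_ofReal_rpow_sq_le hμ hc hp hint

-- Without the truncation at `N` the exponential moments may be infinite.
lemma variance_sum_mul_min_rpow_le (hκ : 1 < κ)
    (hμ : PrekopaLeindlerOn μ (openOrthant n) (rootCost κ)) (hp : 1 ≤ p)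
    (hb : ∀ j, 0 ≤ b j) {N : ℝ} (hN : 0 ≤ N) :
    Var[fun u ↦ ∑ j, b j * min (u j ^ p) N; μ] ≤
      (2 ^ p + p) ^ 2 / (4 * (κ - 1)) * ∫ u, ∑ j, (b j * min (u j ^ p) N) ^ 2 ∂μ := by
  set D := (2 ^ p + p) ^ 2 / (4 * (κ - 1))
  have : 0 < κ - 1 := sub_pos.2 hκ
  have hD : 0 ≤ D / 2 := by positivity
  have term_mem : ∀ᵐ u ∂μ, ∀ j, b j * min (u j ^ p) N ∈ Icc 0 (b j * N) := by
    filter_upwards [ae_rpow_nonneg hμ p] with u hu j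
    exact ⟨mul_nonneg (hb j) (le_min (hu j) hN),
      mul_le_mul_of_nonneg_left (min_le_right _ _) (hb j)⟩
  have linear_measurable : Measurable fun u : Fin n → ℝ ↦ ∑ j, b j * min (u j ^ p) N := by fun_prop
  have square_measurable :
      Measurable fun u : Fin n → ℝ ↦ D / 2 * ∑ j, (b j * min (u j ^ p) N) ^ 2 := by fun_prop
  have linear_exp : integrableExpSet (fun u ↦ ∑ j, b j * min (u j ^ p) N) μ = univ := by
    refine integrableExpSet_eq_univ_of_ae_mem_Icc (a := 0) (b := ∑ j, b j * N)
      linear_measurable.aemeasurable (term_mem.mono fun u hu ↦ ?_)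
    exact ⟨Finset.sum_nonneg fun j _ ↦ (hu j).1, Finset.sum_le_sum fun j _ ↦ (hu j).2⟩
  have square_exp :
      integrableExpSet (fun u ↦ D / 2 * ∑ j, (b j * min (u j ^ p) N) ^ 2) μ = univ := by
    refine integrableExpSet_eq_univ_of_ae_mem_Icc (a := 0) (b := D / 2 * ∑ j, (b j * N) ^ 2)
      square_measurable.aemeasurable (term_mem.mono fun u hu ↦ ⟨by positivity, ?_⟩)
    exact mul_le_mul_of_nonneg_left
      (Finset.sum_le_sum fun j _ ↦ pow_le_pow_left₀ (hu j).1 (hu j).2 2) hD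
  calc Var[fun u ↦ ∑ j, b j * min (u j ^ p) N; μ]
      ≤ 2 * ∫ u, D / 2 * ∑ j, (b j * min (u j ^ p) N) ^ 2 ∂μ :=
        hμ.variance_le linear_measurable square_measurable linear_exp square_exp
          fun s hs u hu v hv ↦ mul_sum_min_rpow_sub_le_rootCost_add hκ hp hb hN hs hu hv
    _ = D * ∫ u, ∑ j, (b j * min (u j ^ p) N) ^ 2 ∂μ := by
        rw [integral_const_mul]
        ring

lemma tendsto_variance_sum_mul_min_rpow
    (hμ : PrekopaLeindlerOn μ (openOrthant n) c) (hb : ∀ j, 0 ≤ b j)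
    (hmem : ∀ j, MemLp (fun u ↦ u j ^ p) 2 μ) :
    Tendsto (fun N : ℕ ↦ Var[fun u ↦ ∑ j, b j * min (u j ^ p) (N : ℝ); μ]) atTop
      (𝓝 Var[fun u ↦ ∑ j, b j * u j ^ p; μ]) := by
  refine tendsto_variance_of_dominated_convergence
    (fun N ↦ Measurable.aestronglyMeasurable (by fun_prop))
    (memLp_finsetSum Finset.univ fun j _ ↦ (hmem j).const_mul (b j)) (fun N ↦ ?_)
    (ae_of_all _ fun u ↦ ?_)
  · filter_upwards [ae_mul_min_rpow_mem_Icc hμ hb N.cast_nonneg] with u hu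
    rw [norm_of_nonneg (Finset.sum_nonneg fun j _ ↦ (hu j).1)]
    exact Finset.sum_le_sum fun j _ ↦ (hu j).2
  · refine tendsto_finsetSum _ fun j _ ↦ Tendsto.const_mul _ <| tendsto_const_nhds.congr' ?_
    filter_upwards [eventually_ge_atTop ⌈u j ^ p⌉₊] with N hN
    exact (min_eq_left (Nat.ceil_le.1 hN)).symm

theorem variance_sum_mul_rpow_le (hκ : 1 < κ)
    (hμ : PrekopaLeindlerOn μ (openOrthant n) (rootCost κ)) (hp : 1 ≤ p)
    (hb : ∀ j, 0 ≤ b j) (hmem : ∀ j, MemLp (fun u ↦ u j ^ p) 2 μ) :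
    Var[fun u ↦ ∑ j, b j * u j ^ p; μ] ≤
      (2 ^ p + p) ^ 2 / (4 * (κ - 1)) * ∑ j, b j ^ 2 * ∫ u, (u j ^ p) ^ 2 ∂μ := by
  have : 0 < κ - 1 := sub_pos.2 hκ
  have sq_integrable (j) : Integrable (fun u ↦ (b j * u j ^ p) ^ 2) μ :=
    ((hmem j).const_mul (b j)).integrable_sq
  refine le_of_tendsto' (tendsto_variance_sum_mul_min_rpow hμ hb hmem) fun N ↦
    (variance_sum_mul_min_rpow_le hκ hμ hp hb N.cast_nonneg).trans ?_
  refine mul_le_mul_of_nonneg_left ?_ (by positivity)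
  calc ∫ u, ∑ j, (b j * min (u j ^ p) (N : ℝ)) ^ 2 ∂μ ≤ ∫ u, ∑ j, (b j * u j ^ p) ^ 2 ∂μ := by
        refine integral_mono_of_nonneg (ae_of_all _ fun u ↦ by positivity)
          (integrable_finsetSum _ fun j _ ↦ sq_integrable j) ?_
        filter_upwards [ae_mul_min_rpow_mem_Icc hμ hb N.cast_nonneg] with u hu
        exact Finset.sum_le_sum fun j _ ↦ pow_le_pow_left₀ (hu j).1 (hu j).2 2
    _ = ∑ j, b j ^ 2 * ∫ u, (u j ^ p) ^ 2 ∂μ := by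
        rw [integral_finsetSum _ fun j _ ↦ sq_integrable j]
        simp only [mul_pow, integral_const_mul]

theorem variance_sum_mul_rpow_le_sq_integral (hκ : 1 < κ)
    (hμ : PrekopaLeindlerOn μ (openOrthant n) (rootCost κ)) (hp : 1 ≤ p)
    (hb : ∀ j, 0 ≤ b j) (hint : ∀ j, Integrable (fun u ↦ u j ^ p) μ) :
    Var[fun u ↦ ∑ j, b j * u j ^ p; μ] ≤
      (2 ^ p + p) ^ 2 / (4 * (κ - 1)) * ∑ j, b j ^ 2 * (2 ^ p * ∫ u, u j ^ p ∂μ) ^ 2 := by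
  have : 0 < κ - 1 := sub_pos.2 hκ
  have hp₀ : 0 ≤ p := zero_le_one.trans hp
  have cost_nonneg : ∀ u ∈ openOrthant n, ∀ v ∈ openOrthant n, 0 ≤ rootCost κ u v :=
    fun u _ v _ ↦ rootCost_nonneg hκ.le u v
  refine (variance_sum_mul_rpow_le hκ hμ hp hb
    fun j ↦ memLp_rpow hμ cost_nonneg hp₀ (hint j)).trans ?_
  gcongr with j
  exact integral_rpow_sq_le hμ cost_nonneg hp₀ (hint j)

end RootMoments

lemma rootCoord_rpow_two_mul {κ : ℝ} (hκ : κ ≠ 0) {n : ℕ} (x : Fin n → ℝ) (i : Fin n) :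
    rootCoord κ x i ^ (2 * κ) = x i ^ 2 := by
  have hx : 0 ≤ rootCoord κ x i := rpow_nonneg (abs_nonneg _) _
  rw [mul_comm, rpow_mul hx, rootCoord_rpow hκ, rpow_two, sq_abs]

theorem var_weighted_sq_le_general {κ : ℝ} (hκ : 1 < κ) {n : ℕ} {Ω : Type*} [MeasurableSpace Ω]
    {P : Measure Ω} [IsProbabilityMeasure P] {X : Ω → Fin n → ℝ} {φ : (Fin n → ℝ) → ℝ}
    (hX : AEMeasurable X P)
    (hX_law : P.map X = volume.withDensity fun x ↦ ENNReal.ofReal (exp (-φ x)))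
    (hφ : ∀ ε : Fin n → ℝ, (∀ i, ε i = 1 ∨ ε i = -1) → ∀ x, φ (fun i ↦ ε i * x i) = φ x)
    (hφ_conv : ConvexOn ℝ {x : Fin n → ℝ | ∀ i, 0 ≤ x i} fun x ↦ φ fun i ↦ x i ^ κ)
    (hX_sq : ∀ i, Integrable (fun ω ↦ X ω i ^ 2) P) (a : Fin n → ℝ) :
    Var[fun ω ↦ ∑ j, a j ^ 2 * X ω j ^ 2; P] ≤
      (2 ^ (2 * κ) + 2 * κ) ^ 2 / (4 * (κ - 1)) * (2 ^ (2 * κ)) ^ 2 *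
        ∑ j, |a j| ^ 4 * (∫ ω, X ω j ^ 2 ∂P) ^ 2 := by
  have hU : AEMeasurable (fun ω ↦ rootCoord κ (X ω)) P :=
    (measurable_rootCoord κ).comp_aemeasurable hX
  set μ := P.map fun ω ↦ rootCoord κ (X ω) with hμ
  have : IsProbabilityMeasure μ := Measure.isProbabilityMeasure_map hU
  have rpow_measurable (j : Fin n) : Measurable fun u : Fin n → ℝ ↦ u j ^ (2 * κ) := by fun_prop
  have hU_rpow (ω j) : rootCoord κ (X ω) j ^ (2 * κ) = X ω j ^ 2 :=
    rootCoord_rpow_two_mul (zero_lt_one.trans hκ).ne' _ _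
  have prekopa : PrekopaLeindlerOn μ (openOrthant n) (rootCost κ) := by
    have := prekopaLeindlerOn_map_rootCoord_withDensity hκ.le hφ hφ_conv
    rwa [← hX_law, AEMeasurable.map_map_of_aemeasurable
      (measurable_rootCoord κ).aemeasurable hX] at this
  have moment_integrable (j) : Integrable (fun u ↦ u j ^ (2 * κ)) μ := by
    rw [hμ, integrable_map_measure (rpow_measurable j).aestronglyMeasurable hU]
    simpa only [Function.comp_def, hU_rpow] using hX_sq j
  have moment (j) : ∫ u, u j ^ (2 * κ) ∂μ = ∫ ω, X ω j ^ 2 ∂P := by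
    rw [hμ, integral_map hU (rpow_measurable j).aestronglyMeasurable]
    simp only [hU_rpow]
  calc Var[fun ω ↦ ∑ j, a j ^ 2 * X ω j ^ 2; P]
      = Var[fun u ↦ ∑ j, a j ^ 2 * u j ^ (2 * κ); μ] := by
        rw [hμ, variance_map (Measurable.aemeasurable (by fun_prop)) hU]
        simp only [Function.comp_def, hU_rpow]
    _ ≤ (2 ^ (2 * κ) + 2 * κ) ^ 2 / (4 * (κ - 1)) *
          ∑ j, (a j ^ 2) ^ 2 * (2 ^ (2 * κ) * ∫ u, u j ^ (2 * κ) ∂μ) ^ 2 :=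
        variance_sum_mul_rpow_le_sq_integral hκ prekopa (by linarith) (fun j ↦ sq_nonneg (a j))
          moment_integrable
    _ = (2 ^ (2 * κ) + 2 * κ) ^ 2 / (4 * (κ - 1)) * (2 ^ (2 * κ)) ^ 2 *
          ∑ j, |a j| ^ 4 * (∫ ω, X ω j ^ 2 ∂P) ^ 2 := by
        rw [mul_assoc, Finset.mul_sum _ _ ((2 ^ (2 * κ)) ^ 2)]
        congr! 2 with j
        rw [moment, mul_pow, ← pow_mul, ← (by decide : Even (2 * 2)).pow_abs]
        ring

/-- Thin-shell type bound: for an isotropic unconditional density `e^{-φ}` with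
`φ(x₁^κ, …, xₙ^κ)` convex on the positive orthant,
`Var(a₁²X₁² + ⋯ + aₙ²Xₙ²) ≤ C_κ ∑ |a_j|⁴`. -/
theorem var_weighted_sq_le (κ : ℝ) (hκ : 1 < κ) :
    ∃ C : ℝ, 0 < C ∧
      ∀ (n : ℕ) (Ω : Type) [MeasureSpace Ω] [IsProbabilityMeasure (ℙ : Measure Ω)]
        (X : Ω → Fin n → ℝ) (φ : (Fin n → ℝ) → ℝ),
        Measurable X →
        -- e^{-φ} is a probability density
        IsProbabilityMeasure ((volume : Measure (Fin n → ℝ)).withDensity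
          (fun x => ENNReal.ofReal (Real.exp (-φ x)))) →
        -- X has density e^{-φ(x)}
        Measure.map X ℙ = (volume : Measure (Fin n → ℝ)).withDensity
          (fun x => ENNReal.ofReal (Real.exp (-φ x))) →
        -- the density is unconditional
        (∀ ε : Fin n → ℝ, (∀ i, ε i = 1 ∨ ε i = -1) →
          ∀ x, φ (fun i => ε i * x i) = φ x) →
        -- X is isotropic
        (∀ i, ∫ ω, X ω i ∂ℙ = 0) →
        (∀ i j, ∫ ω, X ω i * X ω j ∂ℙ = if i = j then 1 else 0) →
        -- φ(x₁^κ, …, xₙ^κ) is convex on the positive orthant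
        ConvexOn ℝ {x : Fin n → ℝ | ∀ i, 0 ≤ x i} (fun x => φ (fun i => x i ^ κ)) →
        ∀ a : Fin n → ℝ,
          variance (fun ω => ∑ j, (a j) ^ 2 * (X ω j) ^ 2) ℙ ≤ C * ∑ j, |a j| ^ 4 := by
  have : 0 < κ - 1 := sub_pos.2 hκ
  refine ⟨(2 ^ (2 * κ) + 2 * κ) ^ 2 / (4 * (κ - 1)) * (2 ^ (2 * κ)) ^ 2, by positivity, ?_⟩
  intro n Ω _ _ X φ hX _ hX_law hφ _ hX_cov hφ_conv a
  have second_moment (j) : ∫ ω, X ω j ^ 2 ∂ℙ = 1 := by simpa [sq] using hX_cov j j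
  simpa only [second_moment, one_pow, mul_one] using
    var_weighted_sq_le_general hκ hX.aemeasurable hX_law hφ hφ_conv
      (fun j ↦ Integrable.of_integral_ne_zero (by simp [second_moment])) a
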